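/- arXiv:1901.02264 — 4 statements merged into one kernel-verified Lean document; each statement's English description precedes it below -/
import Mathlib

section
/- Discrete energy conservation for the linear-wave equations: let DIV be an n×m real matrix, d_c ∈ ℝⁿ and d_v ∈ ℝᵐ positive weight vectors, and define GRAD := −DIV* = −diag(d_v)⁻¹ DIVᵀ diag(d_c). Let ρ₀ ≠ 0 and c ∈ ℝ. If rho : ℝ → ℝⁿ and v : ℝ → ℝᵐ are differentiable and satisfy rho'(t) = −ρ₀ · DIV v(t) and v'(t) = −(1/ρ₀) · GRAD (c² · rho(t)) for all t, then the discrete total energy E(t) := (c²/(2ρ₀)) ⟨rho(t), rho(t)⟩_{d_c} + (ρ₀/2) ⟨v(t), v(t)⟩_{d_v} is constant in t. -/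
/-! The derivative of the energy at `t` is
`(c² / ρ₀) ⟨rho, rho'⟩_{d_c} + ρ₀ ⟨v, v'⟩_{d_v} = -c² ⟨rho, DIV v⟩_{d_c} + c² ⟨v, DIV* rho⟩_{d_v}`,
which vanishes because `DIV*` is the adjoint of `DIV` for the weighted inner products
(`wip_wadj_mulVec`). A real function with zero derivative everywhere is constant. -/

open Matrix BigOperators

/-- Weighted inner product on `ℝᵏ` with positive weights `d`: `⟨x, y⟩_d = ∑ i, d i * x i * y i`. -/
noncomputable def wip {k : ℕ} (d x y : Fin k → ℝ) : ℝ := ∑ i, d i * x i * y i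

/-- Weighted adjoint `A* = diag(d_in)⁻¹ Aᵀ diag(d_out)` of an `n × m` matrix `A`. -/
noncomputable def wadj {n m : ℕ} (A : Matrix (Fin n) (Fin m) ℝ)
    (dOut : Fin n → ℝ) (dIn : Fin m → ℝ) : Matrix (Fin m) (Fin n) ℝ :=
  (Matrix.diagonal dIn)⁻¹ * Aᵀ * Matrix.diagonal dOut

/-- `wadj A dOut dIn` is adjoint to `A` for the weighted inner products; only the weights on the
domain have to be invertible. -/
lemma wip_wadj_mulVec {n m : ℕ} (A : Matrix (Fin n) (Fin m) ℝ) (dOut : Fin n → ℝ)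
    (dIn : Fin m → ℝ) (hIn : ∀ j, dIn j ≠ 0) (x : Fin m → ℝ) (y : Fin n → ℝ) :
    wip dIn x (wadj A dOut dIn *ᵥ y) = wip dOut y (A *ᵥ x) := by
  have hdet : IsUnit (Matrix.diagonal dIn).det := by
    rw [Matrix.det_diagonal, isUnit_iff_ne_zero]
    exact Finset.prod_ne_zero_iff.mpr fun j _ => hIn j
  have hmul : Matrix.diagonal dIn * wadj A dOut dIn = Aᵀ * Matrix.diagonal dOut := by
    rw [wadj, Matrix.mul_assoc, Matrix.mul_nonsing_inv_cancel_left _ _ hdet]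
  have hcomp : ∀ j, dIn j * (wadj A dOut dIn *ᵥ y) j = ∑ i, A i j * (dOut i * y i) := by
    intro j
    have h := congrFun (congrArg (fun M => M *ᵥ y) hmul) j
    simp only [← Matrix.mulVec_mulVec, Matrix.mulVec_diagonal] at h
    rw [h]
    change ∑ i, Aᵀ j i * (Matrix.diagonal dOut *ᵥ y) i = _
    simp only [Matrix.mulVec_diagonal, Matrix.transpose_apply]
  calc wip dIn x (wadj A dOut dIn *ᵥ y)
      = ∑ j, x j * (dIn j * (wadj A dOut dIn *ᵥ y) j) :=
        Finset.sum_congr rfl fun j _ => by ring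
    _ = ∑ j, ∑ i, x j * (A i j * (dOut i * y i)) := by simp only [hcomp, Finset.mul_sum]
    _ = ∑ i, ∑ j, x j * (A i j * (dOut i * y i)) := Finset.sum_comm
    _ = wip dOut y (A *ᵥ x) := by
        simp only [wip, Matrix.mulVec, dotProduct, Finset.mul_sum]
        exact Finset.sum_congr rfl fun i _ => Finset.sum_congr rfl fun j _ => by ring

lemma wip_smul_right {k : ℕ} (d x y : Fin k → ℝ) (a : ℝ) :
    wip d x (a • y) = a * wip d x y := by
  simp only [wip, Pi.smul_apply, smul_eq_mul, Finset.mul_sum]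
  exact Finset.sum_congr rfl fun i _ => by ring

lemma hasDerivAt_wip_self {k : ℕ} (d : Fin k → ℝ) {f : ℝ → Fin k → ℝ} {f' : Fin k → ℝ} {t : ℝ}
    (hf : HasDerivAt f f' t) :
    HasDerivAt (fun s => wip d (f s) (f s)) (2 * wip d (f t) f') t := by
  have h := hasDerivAt_pi.mp hf
  have hsum : HasDerivAt (fun s => ∑ i, d i * f s i * f s i)
      (∑ i, (d i * f' i * f t i + d i * f t i * f' i)) t :=
    HasDerivAt.fun_sum fun i _ => ((h i).const_mul (d i)).mul (h i)
  refine hsum.congr_deriv ?_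
  rw [wip, Finset.mul_sum]
  exact Finset.sum_congr rfl fun i _ => by ring

/-- discrete energy conservation for the linear-wave equations.
With `GRAD := −DIV*`, if `rho'(t) = −ρ₀ • DIV v(t)` and
`v'(t) = −(1/ρ₀) • GRAD (c² • rho(t))`, then the discrete total energy
`E(t) = (c²/(2ρ₀)) ⟨rho t, rho t⟩_{d_c} + (ρ₀/2) ⟨v t, v t⟩_{d_v}` is constant. -/
theorem discrete_energy_conservation_linear_wave (n m : ℕ)
    (DIV : Matrix (Fin n) (Fin m) ℝ)
    (dC : Fin n → ℝ) (dV : Fin m → ℝ)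
    (hdC : ∀ i, 0 < dC i) (hdV : ∀ j, 0 < dV j)
    (ρ₀ c : ℝ) (hρ₀ : ρ₀ ≠ 0)
    (rho : ℝ → Fin n → ℝ) (v : ℝ → Fin m → ℝ)
    (hrho : ∀ t : ℝ, HasDerivAt rho (-(ρ₀ • DIV.mulVec (v t))) t)
    (hv : ∀ t : ℝ,
      HasDerivAt v (-((1 / ρ₀) • (-(wadj DIV dC dV)).mulVec (c ^ 2 • rho t))) t) :
    ∀ s t : ℝ,
      (c ^ 2 / (2 * ρ₀)) * wip dC (rho s) (rho s) + (ρ₀ / 2) * wip dV (v s) (v s)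
        = (c ^ 2 / (2 * ρ₀)) * wip dC (rho t) (rho t) + (ρ₀ / 2) * wip dV (v t) (v t) := by
  have hE : ∀ t, HasDerivAt (fun t => (c ^ 2 / (2 * ρ₀)) * wip dC (rho t) (rho t)
      + (ρ₀ / 2) * wip dV (v t) (v t)) 0 t := by
    intro t
    have hrho' : -(ρ₀ • DIV.mulVec (v t)) = (-ρ₀) • DIV *ᵥ v t := (neg_smul _ _).symm
    have hv' : -((1 / ρ₀) • (-(wadj DIV dC dV)).mulVec (c ^ 2 • rho t))
        = (c ^ 2 / ρ₀) • wadj DIV dC dV *ᵥ rho t := by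
      rw [Matrix.neg_mulVec, Matrix.mulVec_smul, smul_neg, neg_neg, smul_smul]
      congr 1
      ring
    have h := ((hasDerivAt_wip_self dC (hrho t)).const_mul (c ^ 2 / (2 * ρ₀))).add
      ((hasDerivAt_wip_self dV (hv t)).const_mul (ρ₀ / 2))
    rw [hrho', hv', wip_smul_right, wip_smul_right,
      wip_wadj_mulVec DIV dC dV (fun j => (hdV j).ne')] at h
    refine h.congr_deriv ?_
    field_simp
    ring
  exact is_const_of_deriv_eq_zero (fun t => (hE t).differentiableAt) fun t => (hE t).deriv
end

section
/- Discrete energy conservation for the compressible-wave equations: let d_c ∈ ℝⁿ and d_v ∈ ℝᵐ be positive weight vectors, GRAD an m×n real matrix, and for each t ∈ ℝ let rG(t) be an m×n real matrix; set DIVr̃(t) := −rG(t)* = −diag(d_c)⁻¹ rG(t)ᵀ diag(d_v). Let ρ₀ ∈ ℝ, and let R, S, Q, e_int : ℝ → ℝ with R and e_int differentiable and e_int'(y) = ρ₀ · R'(y) · S(y) for all y ∈ ℝ. Let p : ℝ → ℝⁿ and v : ℝ → ℝᵐ be differentiable, and set rho(t) := R applied componentwise to p(t). Assume for all t: (i)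 rho'(t) = −DIVr̃(t) v(t); (ii) v'(t) = −GRAD (Q∘p(t)), where Q∘p(t) means Q applied componentwise; (iii) the discrete chain rule rG(t) (S∘p(t)) = GRAD (Q∘p(t)). Then the discrete total energy E(t) := ⟨𝟙, e_int∘p(t)⟩_{d_c} + (ρ₀/2) ⟨v(t), v(t)⟩_{d_v} is constant in t. -/
open Matrix BigOperators

/-!
The energy has vanishing derivative. Since `e_int' = ρ₀ R' S`, the chain rule gives
`(e_int∘p_i)' = ρ₀ S(p_i) (R∘p_i)'`, and `(R∘p)' = rG* v`, so the internal energy grows at the rate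
`ρ₀ ⟨S∘p, rG* v⟩ = ρ₀ ⟨rG (S∘p), v⟩ = ρ₀ ⟨GRAD (Q∘p), v⟩`, by adjointness and the discrete chain
rule. The kinetic energy grows at the rate `ρ₀ ⟨v, v'⟩ = -ρ₀ ⟨v, GRAD (Q∘p)⟩`, and the two cancel.
-/

theorem wadj_mulVec_apply {n m : ℕ} (A : Matrix (Fin m) (Fin n) ℝ)
    (dOut : Fin m → ℝ) (dIn : Fin n → ℝ) (hd : ∀ i, 0 < dIn i) (y : Fin m → ℝ) (i : Fin n) :
    dIn i * (wadj A dOut dIn).mulVec y i = ∑ j, A j i * (dOut j * y j) := by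
  have hu : IsUnit (Matrix.diagonal dIn).det := by
    rw [Matrix.det_diagonal, isUnit_iff_ne_zero]
    exact Finset.prod_ne_zero_iff.mpr fun i _ => (hd i).ne'
  have h : (Matrix.diagonal dIn) * wadj A dOut dIn = Aᵀ * Matrix.diagonal dOut := by
    rw [wadj, Matrix.mul_assoc, Matrix.mul_nonsing_inv_cancel_left _ _ hu]
  have h2 := congrFun (congrArg (fun M => M.mulVec y) h) i
  simp only [← Matrix.mulVec_mulVec, Matrix.mulVec_diagonal] at h2
  rw [h2]
  simp [Matrix.mulVec, dotProduct, Matrix.diagonal_apply]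

theorem wip_wadj {n m : ℕ} (A : Matrix (Fin m) (Fin n) ℝ)
    (dOut : Fin m → ℝ) (dIn : Fin n → ℝ) (hd : ∀ i, 0 < dIn i)
    (x : Fin n → ℝ) (y : Fin m → ℝ) :
    wip dIn x ((wadj A dOut dIn).mulVec y) = wip dOut (A.mulVec x) y := by
  have h : ∀ i, dIn i * x i * (wadj A dOut dIn).mulVec y i
      = ∑ j, x i * (A j i * (dOut j * y j)) := fun i => by
    rw [← Finset.mul_sum, ← wadj_mulVec_apply A dOut dIn hd]; ring
  simp only [wip, h]
  simp only [Matrix.mulVec, dotProduct, Finset.mul_sum, Finset.sum_mul]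
  rw [Finset.sum_comm]
  refine Finset.sum_congr rfl fun j _ => Finset.sum_congr rfl fun i _ => by ring

/-- discrete energy conservation for the compressible-wave equations.
With `DIVr̃(t) := −rG(t)*`, `rho(t) := R∘p(t)`, if `e_int' = ρ₀ R' S`,
`rho'(t) = −DIVr̃(t) v(t)`, `v'(t) = −GRAD (Q∘p(t))`, and the discrete chain rule
`rG(t) (S∘p(t)) = GRAD (Q∘p(t))` holds, then
`E(t) = ⟨𝟙, e_int∘p(t)⟩_{d_c} + (ρ₀/2) ⟨v t, v t⟩_{d_v}` is constant. -/
theorem discrete_energy_conservation_compressible_wave (n m : ℕ)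
    (dC : Fin n → ℝ) (dV : Fin m → ℝ)
    (hdC : ∀ i, 0 < dC i) (hdV : ∀ j, 0 < dV j)
    (GRAD : Matrix (Fin m) (Fin n) ℝ) (rG : ℝ → Matrix (Fin m) (Fin n) ℝ)
    (ρ₀ : ℝ) (R S Q eInt : ℝ → ℝ)
    (hR : Differentiable ℝ R) (heInt : Differentiable ℝ eInt)
    (heInt' : ∀ y : ℝ, deriv eInt y = ρ₀ * deriv R y * S y)
    (p : ℝ → Fin n → ℝ) (v : ℝ → Fin m → ℝ)
    (hp : Differentiable ℝ p) (hvd : Differentiable ℝ v)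
    (hrho : ∀ t : ℝ,
      HasDerivAt (fun s => fun i => R (p s i))
        (-((-(wadj (rG t) dV dC)).mulVec (v t))) t)
    (hv : ∀ t : ℝ, HasDerivAt v (-(GRAD.mulVec (fun i => Q (p t i)))) t)
    (hchain : ∀ t : ℝ,
      (rG t).mulVec (fun i => S (p t i)) = GRAD.mulVec (fun i => Q (p t i))) :
    ∀ s t : ℝ,
      wip dC (fun _ => (1 : ℝ)) (fun i => eInt (p s i)) + (ρ₀ / 2) * wip dV (v s) (v s)
        = wip dC (fun _ => (1 : ℝ)) (fun i => eInt (p t i)) + (ρ₀ / 2) * wip dV (v t) (v t) := by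
  have key : ∀ t, HasDerivAt (fun t => wip dC (fun _ => (1 : ℝ)) (fun i => eInt (p t i))
      + (ρ₀ / 2) * wip dV (v t) (v t)) 0 t := by
    intro t
    have h1 : ∀ i, HasDerivAt (fun s => eInt (p s i))
        (ρ₀ * S (p t i) * (wadj (rG t) dV dC).mulVec (v t) i) t := by
      intro i
      have hpi : HasDerivAt (fun s => p s i) (deriv p t i) t :=
        hasDerivAt_pi.1 (hp t).hasDerivAt i
      have hr := (hR (p t i)).hasDerivAt.comp t hpi
      have hr' := hasDerivAt_pi.1 (hrho t) i
      -- The two expressions for `(R∘p_i)'` agree.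
      have e := hr.unique hr'
      rw [Matrix.neg_mulVec, neg_neg] at e
      refine HasDerivAt.congr_deriv ((heInt (p t i)).hasDerivAt.comp t hpi) ?_
      rw [heInt', ← e]; ring
    have h2 : HasDerivAt (fun t => wip dC (fun _ => (1 : ℝ)) (fun i => eInt (p t i)))
        (ρ₀ * wip dC (fun i => S (p t i)) ((wadj (rG t) dV dC).mulVec (v t))) t := by
      unfold wip
      rw [Finset.mul_sum]
      refine HasDerivAt.fun_sum fun i _ => ?_
      refine HasDerivAt.congr_deriv ((h1 i).const_mul (dC i * 1)) ?_
      ring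
    have h3 : HasDerivAt (fun t => wip dV (v t) (v t))
        (-2 * wip dV (GRAD.mulVec (fun i => Q (p t i))) (v t)) t := by
      unfold wip
      rw [Finset.mul_sum]
      refine HasDerivAt.fun_sum fun j _ => ?_
      have hj := hasDerivAt_pi.1 (hv t) j
      refine HasDerivAt.congr_deriv ((hj.const_mul (dV j)).mul hj) ?_
      simp only [Pi.neg_apply]
      ring
    refine HasDerivAt.congr_deriv (h2.add (h3.const_mul (ρ₀ / 2))) ?_
    rw [wip_wadj _ _ _ hdC, hchain]
    ring
  exact is_const_of_deriv_eq_zero (fun t => (key t).differentiableAt) fun t => (key t).deriv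
end

section
/- Exact flux-derivative representation of the divergence on a curvilinear grid: let X : ℝ² → ℝ² be twice continuously differentiable, v : ℝ² → ℝ² continuously differentiable, ξ ∈ ℝ², and Δξ, Δη > 0. For ε ≠ 0 define the approximate east and north fluxes F_e(ε) := −(1/ε) (X(ξ + ε(Δξ, Δη)) − X(ξ + ε(Δξ, −Δη)))⊥ · v(X(ξ + ε(Δξ, 0))) and F_n(ε) := (1/ε) (X(ξ + ε(Δξ, Δη)) − X(ξ + ε(−Δξ, Δη)))⊥ · v(X(ξ + ε(0, Δη))). Then lim_{ε → 0, ε ≠ 0} [F_e(ε) − F_e(−ε) + F_n(ε) − F_n(−ε)] / (2ε) = 2 Δξ Δη · det(DX(ξ)) · (div v)(X(ξ)), where DX(ξ) is the Jacobian matrix of X at ξ and div v := ∂v₁/∂x₁ + ∂v₂/∂x₂ is the trace of the Jacobian of v. -/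
/-!
Write `P`, `Q`, `R` for the grid map `X` along the lines `ξ + ε(a, b)`, `ξ + ε(a, -b)`,
`ξ + ε(-a, b)` with `a = Δξ`, `b = Δη`; reversing `ε` exchanges `Q` and `R`. With
`E = P - R`, `D = P - Q`, and `z`, `w` the values of `v ∘ X` at the north and east face centers,
the quotient is `(h ε + h (-ε)) / (2 ε²)`, where `h = E⊥ · z - D⊥ · w`. Since
`E ε + E (-ε) = D ε + D (-ε)` exactly (the edges of a cell close up), the constant
`v (X ξ)` may be subtracted from `z` and `w`. Then `h` becomes a difference of products of two
curves vanishing at `0`, and `h ε / ε²` tends to the same expression in their derivatives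
(`tendsto_perp_dot_div_sq`). What remains is the pointwise identity
`(Le₀)⊥ · M(Le₁) - (Le₁)⊥ · M(Le₀) = det L · tr M` for `L = DX(ξ)`, `M = Dv(X ξ)`
(`perp_dot_identity`).
-/

open Matrix BigOperators

/-- The perp operator on `ℝ²`: `(x, y)⊥ := (−y, x)`. -/
def perp (a : Fin 2 → ℝ) : Fin 2 → ℝ := ![-(a 1), a 0]

theorem det_fin_two_eq (L : (Fin 2 → ℝ) →L[ℝ] (Fin 2 → ℝ)) :
    L.det = L (Pi.single 0 1) 0 * L (Pi.single 1 1) 1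
      - L (Pi.single 1 1) 0 * L (Pi.single 0 1) 1 := by
  change LinearMap.det (L : (Fin 2 → ℝ) →ₗ[ℝ] (Fin 2 → ℝ)) = _
  rw [← LinearMap.det_toMatrix', Matrix.det_fin_two]
  simp [LinearMap.toMatrix'_apply]

theorem clm_apply_fin_two (L : (Fin 2 → ℝ) →L[ℝ] (Fin 2 → ℝ)) (x : Fin 2 → ℝ) :
    L x = x 0 • L (Pi.single 0 1) + x 1 • L (Pi.single 1 1) := by
  rw [← map_smul, ← map_smul, ← map_add]
  congr 1
  ext i
  fin_cases i <;> simp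

/-- The algebraic core: antisymmetrizing `(x, y) ↦ (L x)⊥ · M (L y)` over the (scaled)
coordinate vectors yields the determinant of `L` times the trace of `M`. -/
theorem perp_dot_identity (L M : (Fin 2 → ℝ) →L[ℝ] (Fin 2 → ℝ)) (a b : ℝ) :
    perp (L ![a, b] - L ![-a, b]) ⬝ᵥ M (L ![0, b])
      - perp (L ![a, b] - L ![a, -b]) ⬝ᵥ M (L ![a, 0])
      = 2 * a * b * L.det * ∑ i, M (Pi.single i 1) i := by
  rw [det_fin_two_eq, clm_apply_fin_two M (L ![0, b]), clm_apply_fin_two M (L ![a, 0]),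
    clm_apply_fin_two L ![a, b], clm_apply_fin_two L ![-a, b], clm_apply_fin_two L ![a, -b],
    clm_apply_fin_two L ![0, b], clm_apply_fin_two L ![a, 0]]
  simp [perp, dotProduct, Fin.sum_univ_two]
  ring

/-- Second-order behavior of `e⊥ · f` for two curves that both vanish at `0`. -/
theorem tendsto_perp_dot_div_sq {e f : ℝ → Fin 2 → ℝ} {e' f' : Fin 2 → ℝ}
    (he : HasDerivAt e e' 0) (hf : HasDerivAt f f' 0) (he0 : e 0 = 0) (hf0 : f 0 = 0) :
    Filter.Tendsto (fun ε : ℝ => (perp (e ε) ⬝ᵥ f ε) / ε ^ 2)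
      (nhdsWithin 0 {0}ᶜ) (nhds (perp e' ⬝ᵥ f')) := by
  have hE := tendsto_pi_nhds.1 (hasDerivAt_iff_tendsto_slope.1 he)
  have hF := tendsto_pi_nhds.1 (hasDerivAt_iff_tendsto_slope.1 hf)
  have h := (((hE 1).neg).mul (hF 0)).add ((hE 0).mul (hF 1))
  have hval : perp e' ⬝ᵥ f' = -e' 1 * f' 0 + e' 0 * f' 1 := by
    simp [perp, dotProduct, Fin.sum_univ_two]
  rw [hval]
  refine h.congr' ?_
  filter_upwards [self_mem_nhdsWithin] with ε hε
  have hε' : ε ≠ 0 := hε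
  simp [slope, he0, hf0, perp, dotProduct, Fin.sum_univ_two]
  field_simp

theorem hasDerivAt_comp_line {X : (Fin 2 → ℝ) → (Fin 2 → ℝ)} {ξ : Fin 2 → ℝ}
    (hX : DifferentiableAt ℝ X ξ) (u : Fin 2 → ℝ) :
    HasDerivAt (fun ε : ℝ => X (ξ + ε • u)) (fderiv ℝ X ξ u) 0 :=
  hX.hasFDerivAt.hasLineDerivAt u

/-- exact flux-derivative representation of the divergence on a curvilinear
grid: `lim_{ε→0, ε≠0} (F_e(ε) − F_e(−ε) + F_n(ε) − F_n(−ε))/(2ε)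
  = 2 Δξ Δη det(DX(ξ)) (div v)(X(ξ))`. -/
theorem flux_derivative_divergence
    (X : (Fin 2 → ℝ) → (Fin 2 → ℝ)) (v : (Fin 2 → ℝ) → (Fin 2 → ℝ))
    (hX : ContDiff ℝ 2 X) (hv : ContDiff ℝ 1 v)
    (ξ : Fin 2 → ℝ) (Δξ Δη : ℝ) (hΔξ : 0 < Δξ) (hΔη : 0 < Δη)
    (Fe Fn : ℝ → ℝ)
    (hFe : ∀ ε : ℝ, ε ≠ 0 → Fe ε =
      -(1 / ε) * (perp (X (ξ + ε • ![Δξ, Δη]) - X (ξ + ε • ![Δξ, -Δη]))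
        ⬝ᵥ v (X (ξ + ε • ![Δξ, 0]))))
    (hFn : ∀ ε : ℝ, ε ≠ 0 → Fn ε =
      (1 / ε) * (perp (X (ξ + ε • ![Δξ, Δη]) - X (ξ + ε • ![-Δξ, Δη]))
        ⬝ᵥ v (X (ξ + ε • ![0, Δη])))) :
    Filter.Tendsto (fun ε : ℝ => (Fe ε - Fe (-ε) + Fn ε - Fn (-ε)) / (2 * ε))
      (nhdsWithin 0 {0}ᶜ)
      (nhds (2 * Δξ * Δη * (fderiv ℝ X ξ).det
        * (∑ i, fderiv ℝ v (X ξ) (Pi.single i 1) i))) := by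
  have hXd : DifferentiableAt ℝ X ξ := hX.differentiable (by norm_num) ξ
  have hvd : DifferentiableAt ℝ v (X ξ) := hv.differentiable (by norm_num) (X ξ)
  have hline := hasDerivAt_comp_line hXd
  have hvline : ∀ u : Fin 2 → ℝ,
      HasDerivAt (fun ε : ℝ => v (X (ξ + ε • u)) - v (X ξ))
        (fderiv ℝ v (X ξ) (fderiv ℝ X ξ u)) 0 := by
    intro u
    have h : HasFDerivAt v (fderiv ℝ v (X ξ)) (X (ξ + (0 : ℝ) • u)) := by
      simpa using hvd.hasFDerivAt
    exact (h.comp_hasDerivAt (0 : ℝ) (hline u)).sub_const _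
  have hn := tendsto_perp_dot_div_sq ((hline ![Δξ, Δη]).sub (hline ![-Δξ, Δη]))
    (hvline ![0, Δη]) (by simp) (by simp)
  have he := tendsto_perp_dot_div_sq ((hline ![Δξ, Δη]).sub (hline ![Δξ, -Δη]))
    (hvline ![Δξ, 0]) (by simp) (by simp)
  have hg := hn.sub he
  rw [perp_dot_identity] at hg
  have hneg : Filter.Tendsto (fun ε : ℝ => -ε) (nhdsWithin 0 {0}ᶜ) (nhdsWithin 0 {0}ᶜ) := by
    refine tendsto_nhdsWithin_iff.2 ⟨?_, ?_⟩
    · exact (continuous_neg.tendsto' (0 : ℝ) 0 neg_zero).mono_left nhdsWithin_le_nhds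
    · filter_upwards [self_mem_nhdsWithin] with ε hε
      simpa using hε
  have hs := (hg.add (hg.comp hneg)).div_const 2
  rw [add_self_div_two] at hs
  refine hs.congr' ?_
  filter_upwards [self_mem_nhdsWithin] with ε hε
  have hε' : ε ≠ 0 := hε
  -- Reversing `ε` permutes the corners of the cell.
  have h1 : (-ε) • ![Δξ, -Δη] = ε • ![-Δξ, Δη] := by ext i; fin_cases i <;> simp
  have h2 : (-ε) • ![-Δξ, Δη] = ε • ![Δξ, -Δη] := by ext i; fin_cases i <;> simp
  rw [hFe ε hε', hFe (-ε) (neg_ne_zero.2 hε'), hFn ε hε', hFn (-ε) (neg_ne_zero.2 hε')]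
  simp only [Function.comp_apply, Pi.sub_apply, h1, h2]
  simp only [perp, dotProduct, Fin.sum_univ_two, Pi.sub_apply, Matrix.cons_val_zero,
    Matrix.cons_val_one]
  field_simp
  ring
end

section
/- Continuous energy equation for the compressible-wave equations: let d ≥ 1, let p : ℝᵈ × ℝ → ℝ and v : ℝᵈ × ℝ → ℝᵈ be differentiable, let ρ₀ ∈ ℝ, and let R, Q, S : ℝ → ℝ be differentiable with R(y) ≠ 0, Q'(y) = 1/R(y) and S'(y) = 1/R(y)² for all y ∈ ℝ. Set ρ := R∘p, e_int := ρ₀ (R∘p · S∘p − Q∘p), and e := e_int + (ρ₀/2)|v|². Assume that at every point (x, t): ∂ρ/∂t + div_x(ρ v) = 0 and ∂v/∂t + ∇_x (Q∘p) = 0. Then at every point (x, t): ∂e/∂t + div_x ((e_int + ρ₀ · Q∘p) v) = 0. -/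
/-!
Both terms of the energy balance are rewritten through the two equations of motion. Since
`Q' = 1/R` and `S' = 1/R²`, the terms `R S' dp` and `Q' dp` cancel in
`d(R S - Q) = S dR + R S' dp - Q' dp`, so `∂ₜ e_int = ρ₀ S ∂ₜρ`. The flux is
`(e_int + ρ₀ Q) v = ρ₀ S (ρ v)`, whose divergence is
`ρ₀ S div (ρ v) + ρ₀ R S' v · ∇p = ρ₀ S div (ρ v) + ρ₀ v · ∇Q`. The momentum equation turns
`ρ₀ v · ∂ₜv` into `-ρ₀ v · ∇Q`, so the sum is `ρ₀ S (∂ₜρ + div (ρ v)) = 0`.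
-/

open BigOperators

/-- continuous energy equation for the compressible-wave equations.
With `ρ = R∘p`, `Q' = 1/R`, `S' = 1/R²`, `e_int = ρ₀ (R∘p · S∘p − Q∘p)`,
`e = e_int + (ρ₀/2)|v|²`, if `∂ρ/∂t + div_x(ρ v) = 0` and `∂v/∂t + ∇_x(Q∘p) = 0`, then
`∂e/∂t + div_x ((e_int + ρ₀ Q∘p) v) = 0`. -/
theorem continuous_energy_equation_compressible_wave (d : ℕ) (hd : 1 ≤ d)
    (p : (Fin d → ℝ) × ℝ → ℝ) (v : (Fin d → ℝ) × ℝ → (Fin d → ℝ))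
    (hp : Differentiable ℝ p) (hv : Differentiable ℝ v)
    (ρ₀ : ℝ) (R Q S : ℝ → ℝ)
    (hR : Differentiable ℝ R) (hQ : Differentiable ℝ Q) (hS : Differentiable ℝ S)
    (hRne : ∀ y : ℝ, R y ≠ 0)
    (hQ' : ∀ y : ℝ, deriv Q y = 1 / R y)
    (hS' : ∀ y : ℝ, deriv S y = 1 / (R y) ^ 2)
    (hcont : ∀ q : (Fin d → ℝ) × ℝ,
      fderiv ℝ (fun q => R (p q)) q (0, 1)
        + ∑ i, fderiv ℝ (fun q => R (p q) * v q i) q (Pi.single i 1, 0) = 0)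
    (hmom : ∀ q : (Fin d → ℝ) × ℝ, ∀ i : Fin d,
      fderiv ℝ v q (0, 1) i
        + fderiv ℝ (fun q => Q (p q)) q (Pi.single i 1, 0) = 0) :
    ∀ q : (Fin d → ℝ) × ℝ,
      fderiv ℝ (fun q => ρ₀ * (R (p q) * S (p q) - Q (p q))
          + (ρ₀ / 2) * ∑ i, (v q i) ^ 2) q (0, 1)
        + ∑ i, fderiv ℝ
            (fun q => (ρ₀ * (R (p q) * S (p q) - Q (p q)) + ρ₀ * Q (p q)) * v q i)
            q (Pi.single i 1, 0) = 0 := by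
  intro q
  have hP := (hp q).hasFDerivAt
  have hρ : HasFDerivAt (fun q => R (p q)) (fderiv ℝ (fun q => R (p q)) q) q :=
    ((hR (p q)).comp q (hp q)).hasFDerivAt
  have hQP : HasFDerivAt (fun q => Q (p q)) ((1 / R (p q)) • fderiv ℝ p q) q := by
    have h := (hQ (p q)).hasDerivAt.comp_hasFDerivAt q hP
    rwa [hQ'] at h
  have hSP : HasFDerivAt (fun q => S (p q)) ((1 / R (p q) ^ 2) • fderiv ℝ p q) q := by
    have h := (hS (p q)).hasDerivAt.comp_hasFDerivAt q hP
    rwa [hS'] at h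
  have hV : ∀ i, HasFDerivAt (fun q => v q i)
      ((ContinuousLinearMap.proj i).comp (fderiv ℝ v q)) q :=
    hasFDerivAt_pi'.1 (hv q).hasFDerivAt
  have hm : ∀ i, HasFDerivAt (fun q => R (p q) * v q i)
      (fderiv ℝ (fun q => R (p q) * v q i) q) q :=
    fun i => (hρ.mul (hV i)).differentiableAt.hasFDerivAt
  have hr := hRne (p q)
  have htime : fderiv ℝ (fun q => ρ₀ * (R (p q) * S (p q) - Q (p q))
      + (ρ₀ / 2) * ∑ i, (v q i) ^ 2) q (0, 1)
      = ρ₀ * S (p q) * fderiv ℝ (fun q => R (p q)) q (0, 1)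
        + ρ₀ * ∑ i, v q i * fderiv ℝ v q (0, 1) i := by
    have h := (((hρ.mul hSP).sub hQP).const_mul ρ₀).add
      ((HasFDerivAt.fun_sum (u := Finset.univ) fun i _ => (hV i).pow 2).const_mul (ρ₀ / 2))
    refine (congrArg (fun L => L (0, 1)) h.fderiv).trans ?_
    have hk : ∑ i, 2 * v q i * fderiv ℝ v q (0, 1) i
        = 2 * ∑ i, v q i * fderiv ℝ v q (0, 1) i := by
      simp only [Finset.mul_sum, mul_assoc]
    simp [hk]
    field_simp
    ring
  have hflux : ∀ i, fderiv ℝ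
      (fun q => (ρ₀ * (R (p q) * S (p q) - Q (p q)) + ρ₀ * Q (p q)) * v q i)
        q (Pi.single i 1, 0)
      = ρ₀ * S (p q) * fderiv ℝ (fun q => R (p q) * v q i) q (Pi.single i 1, 0)
        - ρ₀ * (v q i * fderiv ℝ v q (0, 1) i) := by
    intro i
    have he : (fun q => (ρ₀ * (R (p q) * S (p q) - Q (p q)) + ρ₀ * Q (p q)) * v q i)
        = fun q => ρ₀ * (S (p q) * (R (p q) * v q i)) := by
      funext z
      ring
    have hmi := hmom q i
    rw [hQP.fderiv] at hmi
    have hmi' := eq_neg_of_add_eq_zero_left hmi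
    rw [he, hmi']
    refine (congrArg (fun L => L (Pi.single i 1, 0))
      ((hSP.mul (hm i)).const_mul ρ₀).fderiv).trans ?_
    simp only [add_apply, smul_apply, smul_eq_mul]
    field_simp
    ring
  rw [htime, Finset.sum_congr rfl fun i _ => hflux i, Finset.sum_sub_distrib,
    ← Finset.mul_sum, ← Finset.mul_sum]
  linear_combination ρ₀ * S (p q) * hcont q
end
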